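/- arXiv:2510.27258 — 10 statements merged into one kernel-verified Lean document; each statement's English description precedes it below -/
import Mathlib

section
/- Let W ∈ ℝ^{n×n} be the causally masked affinity matrix W_{i,j} = q_iᵀ k_j for j ≤ i and W_{i,j} = 0 for j > i. Then for every t ∈ {1,…,n}, the masked second-order numerator satisfies Σ_{j=1}^{t} (W Wᵀ)_{t,j} v_jᵀ = q_tᵀ (S^K_t C^{QV}_t − G_t), as an identity of row vectors in ℝ^{1×d_v}. -/
open Matrix Finset

/-!
Splitting the pairs `i, j ≤ t` into `i ≤ j` and `j < i` is a summation by parts: subtracting `G_t`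
from `S^K_t C^{QV}_t` leaves `∑_{j ≤ t} S^K_j q_j v_jᵀ`. On the other side, a key `k_l` contributes
to `(W Wᵀ)_{t,j}` only when `l ≤ t` and `l ≤ j`, so this entry is `q_tᵀ S^K_j q_j` for `j ≤ t`.
-/

section PrefixSums

variable {ι : Type*} [LinearOrder ι] [LocallyFiniteOrderBot ι]

theorem sum_Iic_sum_Iic_eq_add {M : Type*} [AddCommMonoid M] (t : ι) (f : ι → ι → M) :
    ∑ i ∈ Iic t, ∑ j ∈ Iic t, f i j
      = ∑ j ∈ Iic t, ∑ i ∈ Iic j, f i j + ∑ i ∈ Iic t, ∑ j ∈ Iio i, f i j := by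
  have upper_triangle : ∑ j ∈ Iic t, ∑ i ∈ Iic j, f i j
      = ∑ i ∈ Iic t, ∑ j ∈ Iic t with i ≤ j, f i j :=
    sum_comm' fun j i => by
      simp only [mem_Iic, mem_filter]
      exact ⟨fun ⟨hj, hi⟩ => ⟨⟨hj, hi⟩, hi.trans hj⟩, fun h => h.1⟩
  rw [upper_triangle, ← sum_add_distrib]
  refine sum_congr rfl fun i hi => ?_
  have below : Iio i = {j ∈ Iic t | ¬ i ≤ j} := by
    ext j
    simp only [mem_Iio, mem_filter, mem_Iic, not_le]
    exact ⟨fun hj => ⟨hj.le.trans (mem_Iic.mp hi), hj⟩, fun h => h.2⟩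
  rw [below, sum_filter_add_sum_filter_not]

theorem sum_Iic_matrix_mul_sum_Iic_eq_add {l m n R : Type*} [Fintype m]
    [NonUnitalNonAssocSemiring R] (t : ι) (A : ι → Matrix l m R) (B : ι → Matrix m n R) :
    (∑ i ∈ Iic t, A i) * (∑ j ∈ Iic t, B j)
      = ∑ j ∈ Iic t, (∑ i ∈ Iic j, A i) * B j + ∑ i ∈ Iic t, A i * ∑ j ∈ Iio i, B j := by
  simp only [Matrix.sum_mul, Matrix.mul_sum]
  rw [sum_comm, sum_Iic_sum_Iic_eq_add]

end PrefixSums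

section CausalAttention

variable {ι m R : Type*} [LinearOrder ι] [Fintype m]

/-- The causally masked affinity matrix `W` of queries `q` and keys `k`: rows are indexed by
queries, columns by keys, and the diagonal is kept. -/
def causalAffinity [NonUnitalNonAssocSemiring R] (q k : ι → m → R) : Matrix ι ι R :=
  of fun i j => if j ≤ i then q i ⬝ᵥ k j else 0

/-- The prefix summary `S^K_s` of the outer products of the keys, with `s` included. -/
def keyMoment [LocallyFiniteOrderBot ι] [NonUnitalNonAssocSemiring R] (k : ι → m → R) (s : ι) :
    Matrix m m R :=
  ∑ i ∈ Iic s, vecMulVec (k i) (k i)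

variable [Fintype ι] [LocallyFiniteOrderBot ι]

theorem causalAffinity_mul_transpose_apply [CommSemiring R] (q k : ι → m → R) (i j : ι) :
    (causalAffinity q k * (causalAffinity q k)ᵀ) i j
      = (q i ᵥ* keyMoment k (min i j)) ⬝ᵥ q j := by
  have common_keys : Iic (min i j) = ({l | l ≤ i ∧ l ≤ j} : Finset ι) := by
    ext l
    simp only [mem_Iic, le_min_iff, mem_filter_univ]
  calc (causalAffinity q k * (causalAffinity q k)ᵀ) i j
      = ∑ l, if l ≤ i ∧ l ≤ j then (q i ⬝ᵥ k l) * (q j ⬝ᵥ k l) else 0 := by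
        simp only [mul_apply, transpose_apply, causalAffinity, of_apply, ite_zero_mul_ite_zero]
    _ = ∑ l ∈ Iic (min i j), (q i ⬝ᵥ k l) * (k l ⬝ᵥ q j) := by
        simp only [common_keys, sum_filter, dotProduct_comm (q j)]
    _ = (q i ᵥ* keyMoment k (min i j)) ⬝ᵥ q j := by
        simp only [keyMoment, vecMul_sum, sum_dotProduct, vecMul_vecMulVec, smul_dotProduct,
          smul_eq_mul]

theorem masked_second_order_numerator_general {n : Type*} [CommRing R] (q k : ι → m → R)
    (v : ι → n → R) (t : ι) :
    ∑ j ∈ Iic t, (causalAffinity q k * (causalAffinity q k)ᵀ) t j • v j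
      = q t ᵥ* (keyMoment k t * (∑ i ∈ Iic t, vecMulVec (q i) (v i))
          - ∑ i ∈ Iic t, vecMulVec (k i) (k i) * ∑ j ∈ Iio i, vecMulVec (q j) (v j)) := by
  have summation_by_parts :
      keyMoment k t * (∑ i ∈ Iic t, vecMulVec (q i) (v i))
          - ∑ i ∈ Iic t, vecMulVec (k i) (k i) * ∑ j ∈ Iio i, vecMulVec (q j) (v j)
        = ∑ j ∈ Iic t, keyMoment k j * vecMulVec (q j) (v j) :=
    sub_eq_of_eq_add (sum_Iic_matrix_mul_sum_Iic_eq_add t _ _)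
  rw [summation_by_parts, vecMul_sum]
  refine sum_congr rfl fun j hj => ?_
  rw [causalAffinity_mul_transpose_apply, min_eq_right (mem_Iic.mp hj), ← vecMul_vecMul,
    vecMul_vecMulVec]

end CausalAttention

/-- masked second-order numerator identity
`Σ_{j≤t} (W Wᵀ)_{t,j} vⱼᵀ = q_tᵀ (S^K_t C^{QV}_t − G_t)` as row vectors. -/
theorem masked_second_order_numerator
    (n d dv : ℕ) (q k : Fin n → Fin d → ℝ) (v : Fin n → Fin dv → ℝ)
    (W : Matrix (Fin n) (Fin n) ℝ)
    (hW : ∀ i j : Fin n, W i j = if j ≤ i then q i ⬝ᵥ k j else 0) :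
    ∀ t : Fin n,
      ∑ j ∈ Iic t, (W * Wᵀ) t j • v j
        = (q t) ᵥ*
            ((∑ i ∈ Iic t, vecMulVec (k i) (k i)) * (∑ i ∈ Iic t, vecMulVec (q i) (v i))
              - ∑ i ∈ Iic t, vecMulVec (k i) (k i) * (∑ j ∈ Iio i, vecMulVec (q j) (v j))) := by
  obtain rfl : W = causalAffinity q k := Matrix.ext hW
  exact masked_second_order_numerator_general q k v
end

section
/- Let W ∈ ℝ^{n×n} be the causally masked affinity matrix W_{i,j} = q_iᵀ k_j for j ≤ i and W_{i,j} = 0 for j > i. Then for every t ∈ {1,…,n}, the masked second-order denominator satisfies Σ_{j=1}^{t} (W Wᵀ)_{t,j} = q_tᵀ (S^K_t m^Q_t − h_t), as an identity of real scalars. -/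
/-!
Only indices `i ≤ t` survive in row `t` of `W`, so the left-hand side is
`∑ i ≤ t, ⟪q t, k i⟫ * ∑ j ≤ t, W j i`. The mask restricts the inner sum to `i ≤ j ≤ t`, so it
equals `⟪k i, m t - m (i - 1)⟫` for the prefix sums `m` of the queries. Now sum the rank-one forms
`⟪q t, k i⟫ * ⟪k i, x⟫ = ⟪q t, (k i (k i)ᵀ) x⟫` over `i ≤ t`: the part `x = m t` gives `S t * m t`,
and the part `x = m (i - 1)` gives the causal correction `h t`.
-/

open Matrix Finset

section Matrix

variable {R m n : Type*} [NonUnitalSemiring R] [Fintype m] [Fintype n]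

theorem dotProduct_vecMulVec_mulVec (u v : m → R) (w x : n → R) :
    u ⬝ᵥ (vecMulVec v w *ᵥ x) = (u ⬝ᵥ v) * (w ⬝ᵥ x) := by
  rw [dotProduct_mulVec, vecMul_vecMulVec, smul_dotProduct, smul_eq_mul]

end Matrix

section MaskedAffinity

variable {ι R m : Type*} [Fintype m]

/-- The causally masked affinity matrix of the queries `q` and keys `k`: rows are indexed by
queries, and query `i` sees exactly the keys `j ≤ i`. -/
def maskedAffinity [LE ι] [DecidableLE ι] [NonUnitalNonAssocSemiring R]
    (q k : ι → m → R) : Matrix ι ι R :=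
  of fun i j => if j ≤ i then q i ⬝ᵥ k j else 0

theorem maskedAffinity_mul_apply [Fintype ι] [Preorder ι] [DecidableLE ι]
    [LocallyFiniteOrderBot ι] [NonUnitalNonAssocSemiring R] {κ : Type*}
    (q k : ι → m → R) (A : Matrix ι κ R) (t : ι) (j : κ) :
    (maskedAffinity q k * A) t j = ∑ i ∈ Iic t, (q t ⬝ᵥ k i) * A i j := by
  simp only [mul_apply, maskedAffinity, of_apply, ite_mul, zero_mul, ← sum_filter,
    filter_ge_eq_Iic]

theorem sum_Iic_maskedAffinity_apply [LinearOrder ι] [LocallyFiniteOrderBot ι]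
    [NonUnitalNonAssocRing R] (q k : ι → m → R) {i t : ι} (hit : i ≤ t) :
    ∑ j ∈ Iic t, maskedAffinity q k j i = (∑ j ∈ Iic t, q j - ∑ j ∈ Iio i, q j) ⬝ᵥ k i := by
  have Iio_subset : Iio i ⊆ Iic t := fun _ hj => mem_Iic.2 ((mem_Iio.1 hj).le.trans hit)
  have filter_le : {j ∈ Iic t | i ≤ j} = Iic t \ Iio i := by ext; simp
  simp only [maskedAffinity, of_apply]
  rw [← sum_filter, filter_le, ← sum_dotProduct, sum_sdiff_eq_sub Iio_subset]

theorem masked_second_order_denominator_general [Fintype ι] [LinearOrder ι]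
    [LocallyFiniteOrderBot ι] [NonUnitalCommRing R] (q k : ι → m → R) (t : ι) :
    ∑ j ∈ Iic t, (maskedAffinity q k * (maskedAffinity q k)ᵀ) t j
      = q t ⬝ᵥ
          ((∑ i ∈ Iic t, vecMulVec (k i) (k i)) *ᵥ (∑ i ∈ Iic t, q i)
            - ∑ i ∈ Iic t, vecMulVec (k i) (k i) *ᵥ (∑ j ∈ Iio i, q j)) := by
  calc
    _ = ∑ i ∈ Iic t, (q t ⬝ᵥ k i) * ∑ j ∈ Iic t, maskedAffinity q k j i := by
      simp only [maskedAffinity_mul_apply, transpose_apply, mul_sum]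
      exact sum_comm
    _ = ∑ i ∈ Iic t, (q t ⬝ᵥ k i) * (k i ⬝ᵥ (∑ j ∈ Iic t, q j - ∑ j ∈ Iio i, q j)) :=
      sum_congr rfl fun i hi => by
        rw [sum_Iic_maskedAffinity_apply q k (mem_Iic.1 hi), dotProduct_comm (k i)]
    _ = q t ⬝ᵥ ∑ i ∈ Iic t,
          vecMulVec (k i) (k i) *ᵥ (∑ j ∈ Iic t, q j - ∑ j ∈ Iio i, q j) := by
      simp only [dotProduct_sum, dotProduct_vecMulVec_mulVec]
    _ = _ := by
      simp only [mulVec_sub, sum_sub_distrib, sum_mulVec]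

end MaskedAffinity

/-- masked second-order denominator identity
`Σ_{j≤t} (W Wᵀ)_{t,j} = q_tᵀ (S^K_t m^Q_t − h_t)` as scalars. -/
theorem masked_second_order_denominator
    (n d : ℕ) (q k : Fin n → Fin d → ℝ)
    (W : Matrix (Fin n) (Fin n) ℝ)
    (hW : ∀ i j : Fin n, W i j = if j ≤ i then q i ⬝ᵥ k j else 0) :
    ∀ t : Fin n,
      ∑ j ∈ Iic t, (W * Wᵀ) t j
        = q t ⬝ᵥ
            ((∑ i ∈ Iic t, vecMulVec (k i) (k i)) *ᵥ (∑ i ∈ Iic t, q i)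
              - ∑ i ∈ Iic t, (vecMulVec (k i) (k i)) *ᵥ (∑ j ∈ Iio i, q j)) := by
  obtain rfl : W = maskedAffinity q k := Matrix.ext hW
  exact masked_second_order_denominator_general q k
end

section
/- The binary operation ⊕ on tuples (S, C, m, G, h) ∈ ℝ^{d×d} × ℝ^{d×d_v} × ℝ^d × ℝ^{d×d_v} × ℝ^d defined by (S_A, C_A, m_A, G_A, h_A) ⊕ (S_B, C_B, m_B, G_B, h_B) = (S_A + S_B, C_A + C_B, m_A + m_B, G_A + G_B + S_B C_A, h_A + h_B + S_B m_A) is associative, and the all-zero tuple is a two-sided identity for ⊕. -/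
/-!
`⊕` is componentwise addition corrected by the cross terms `(S_B C_A, S_B m_A)`, which are
biadditive in `(A, B)`. A biadditive map is a normalized 2-cocycle: both sides of the cocycle
identity expand to the sum of the cross terms of the three pairs. Addition twisted by such a
cocycle is associative and keeps its zero.
-/

open Matrix

/-- Masked second-order HLA state `(S, C, m, G, h)`. -/
abbrev HLAState (d dv : ℕ) :=
  Matrix (Fin d) (Fin d) ℝ × Matrix (Fin d) (Fin dv) ℝ × (Fin d → ℝ) ×
    Matrix (Fin d) (Fin dv) ℝ × (Fin d → ℝ)

/-- The semidirect-product concatenation operator of Eq. (semidirect). -/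
def hlaOp (d dv : ℕ) (A B : HLAState d dv) : HLAState d dv :=
  (A.1 + B.1,
   A.2.1 + B.2.1,
   A.2.2.1 + B.2.2.1,
   A.2.2.2.1 + B.2.2.2.1 + B.1 * A.2.1,
   A.2.2.2.2 + B.2.2.2.2 + B.1 *ᵥ A.2.2.1)

section BiadditiveCocycle

variable {M P Q : Type*} [AddZeroClass M] [AddZeroClass P] [AddCommMonoid Q]

theorem biadditive_cocycle (φ : M →+ P →+ Q) (s₂ s₃ : M) (p₁ p₂ : P) :
    φ s₂ p₁ + φ s₃ (p₁ + p₂) = φ s₃ p₂ + φ (s₂ + s₃) p₁ := by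
  simp only [map_add, AddMonoidHom.add_apply]
  abel

theorem add_add_biadditive_assoc (φ : M →+ P →+ Q) (s₂ s₃ : M) (p₁ p₂ : P) (q₁ q₂ q₃ : Q) :
    q₁ + q₂ + φ s₂ p₁ + q₃ + φ s₃ (p₁ + p₂) =
      q₁ + (q₂ + q₃ + φ s₃ p₂) + φ (s₂ + s₃) p₁ :=
  calc
    _ = q₁ + q₂ + q₃ + (φ s₂ p₁ + φ s₃ (p₁ + p₂)) := by abel
    _ = q₁ + q₂ + q₃ + (φ s₃ p₂ + φ (s₂ + s₃) p₁) := by rw [biadditive_cocycle]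
    _ = _ := by abel

end BiadditiveCocycle

section TwistedAdd

variable {M P P' Q Q' : Type*}

/-- Componentwise addition on `M × P × P' × Q × Q'`, with the last two components twisted by the
biadditive maps `φ` and `ψ`. The operator `⊕` is the case where `φ` is matrix multiplication and
`ψ` is matrix–vector multiplication. As in `⊕`, the `M`-component of the right summand acts on the
left summand. -/
def twistedAdd [AddZeroClass M] [AddZeroClass P] [AddZeroClass P'] [AddCommMonoid Q]
    [AddCommMonoid Q'] (φ : M →+ P →+ Q) (ψ : M →+ P' →+ Q') (A B : M × P × P' × Q × Q') :
    M × P × P' × Q × Q' :=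
  (A.1 + B.1,
   A.2.1 + B.2.1,
   A.2.2.1 + B.2.2.1,
   A.2.2.2.1 + B.2.2.2.1 + φ B.1 A.2.1,
   A.2.2.2.2 + B.2.2.2.2 + ψ B.1 A.2.2.1)

theorem twistedAdd_assoc [AddMonoid M] [AddMonoid P] [AddMonoid P'] [AddCommMonoid Q]
    [AddCommMonoid Q'] (φ : M →+ P →+ Q) (ψ : M →+ P' →+ Q') (A B C : M × P × P' × Q × Q') :
    twistedAdd φ ψ (twistedAdd φ ψ A B) C = twistedAdd φ ψ A (twistedAdd φ ψ B C) := by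
  simp only [twistedAdd, add_assoc A.1, add_assoc A.2.1, add_assoc A.2.2.1,
    add_add_biadditive_assoc]

section Zero

variable [AddZeroClass M] [AddZeroClass P] [AddZeroClass P'] [AddCommMonoid Q] [AddCommMonoid Q']

theorem zero_twistedAdd (φ : M →+ P →+ Q) (ψ : M →+ P' →+ Q') (A : M × P × P' × Q × Q') :
    twistedAdd φ ψ 0 A = A := by
  simp [twistedAdd]

theorem twistedAdd_zero (φ : M →+ P →+ Q) (ψ : M →+ P' →+ Q') (A : M × P × P' × Q × Q') :
    twistedAdd φ ψ A 0 = A := by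
  simp [twistedAdd]

end Zero

theorem hlaOp_assoc_and_zero_identity_general [AddMonoid M] [AddMonoid P] [AddMonoid P']
    [AddCommMonoid Q] [AddCommMonoid Q'] (φ : M →+ P →+ Q) (ψ : M →+ P' →+ Q') :
    (∀ A B C : M × P × P' × Q × Q',
      twistedAdd φ ψ (twistedAdd φ ψ A B) C = twistedAdd φ ψ A (twistedAdd φ ψ B C)) ∧
    (∀ A : M × P × P' × Q × Q', twistedAdd φ ψ 0 A = A ∧ twistedAdd φ ψ A 0 = A) :=
  ⟨twistedAdd_assoc φ ψ, fun A => ⟨zero_twistedAdd φ ψ A, twistedAdd_zero φ ψ A⟩⟩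

end TwistedAdd

theorem hlaOp_eq_twistedAdd (d dv : ℕ) :
    hlaOp d dv =
      twistedAdd (LinearMap.toAddMonoidHom'.comp (mulLinearMap ℝ).toAddMonoidHom)
        (LinearMap.toAddMonoidHom'.comp (mulVecBilin ℝ ℝ).toAddMonoidHom) :=
  rfl

/-- `⊕` is associative with the all-zero tuple as a two-sided identity. -/
theorem hlaOp_assoc_and_zero_identity (d dv : ℕ) :
    (∀ A B C : HLAState d dv, hlaOp d dv (hlaOp d dv A B) C = hlaOp d dv A (hlaOp d dv B C)) ∧
    (∀ A : HLAState d dv, hlaOp d dv 0 A = A ∧ hlaOp d dv A 0 = A) := by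
  rw [hlaOp_eq_twistedAdd]
  exact hlaOp_assoc_and_zero_identity_general _ _
end

section
/- Define token segments T_i = (k_i k_iᵀ, q_i v_iᵀ, q_i, 0, 0) for i = 1,…,n and the operation (S_A, C_A, m_A, G_A, h_A) ⊕ (S_B, C_B, m_B, G_B, h_B) = (S_A + S_B, C_A + C_B, m_A + m_B, G_A + G_B + S_B C_A, h_A + h_B + S_B m_A). Then for every t ∈ {1,…,n}, the left fold ((T_1 ⊕ T_2) ⊕ ⋯ ) ⊕ T_t (starting from the all-zero tuple) equals (S^K_t, C^{QV}_t, m^Q_t, G_t, h_t). -/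
open Matrix Finset

/-- Token segment `T_i = (kᵢkᵢᵀ, qᵢvᵢᵀ, qᵢ, 0, 0)`. -/
def hlaToken (d dv : ℕ) (q k : ℕ → Fin d → ℝ) (v : ℕ → Fin dv → ℝ) (i : ℕ) :
    HLAState d dv :=
  (vecMulVec (k i) (k i), vecMulVec (q i) (v i), q i, 0, 0)

/- Appending a segment adds to `G` and `h` its matrix `S` applied to the `C` and `m` accumulated so
far, so a left fold pairs each `S` with the prefix sums of `C` and `m` strictly before it. -/
theorem foldl_hlaOp_map_range {d dv : ℕ} (A : HLAState d dv) (T : ℕ → HLAState d dv) (t : ℕ) :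
    ((List.range t).map T).foldl (hlaOp d dv) A =
      (A.1 + ∑ i ∈ range t, (T i).1,
       A.2.1 + ∑ i ∈ range t, (T i).2.1,
       A.2.2.1 + ∑ i ∈ range t, (T i).2.2.1,
       A.2.2.2.1 + ∑ i ∈ range t,
         ((T i).2.2.2.1 + (T i).1 * (A.2.1 + ∑ j ∈ range i, (T j).2.1)),
       A.2.2.2.2 + ∑ i ∈ range t,
         ((T i).2.2.2.2 + (T i).1 *ᵥ (A.2.2.1 + ∑ j ∈ range i, (T j).2.2.1))) := by
  induction t with
  | zero =>
    simp only [List.range_zero, List.map_nil, List.foldl_nil, range_zero, sum_empty, add_zero]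
  | succ t ih =>
    simp only [List.range_succ, List.map_append, List.map_singleton, List.foldl_append, ih,
      List.foldl_cons, List.foldl_nil, hlaOp, sum_range_succ, add_assoc]

/-- the left fold of the token segments `T_1, …, T_t` under `⊕`
(starting from the all-zero tuple) equals `(S^K_t, C^{QV}_t, m^Q_t, G_t, h_t)`. -/
theorem hla_fold_eq_prefix_summaries
    (n d dv : ℕ) (q k : ℕ → Fin d → ℝ) (v : ℕ → Fin dv → ℝ) :
    ∀ t, 1 ≤ t → t ≤ n →
      List.foldl (hlaOp d dv) 0 ((List.range t).map fun i => hlaToken d dv q k v (i + 1))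
        = (∑ i ∈ Icc 1 t, vecMulVec (k i) (k i),
           ∑ i ∈ Icc 1 t, vecMulVec (q i) (v i),
           ∑ i ∈ Icc 1 t, q i,
           ∑ i ∈ Icc 1 t, vecMulVec (k i) (k i) * (∑ j ∈ Ico 1 i, vecMulVec (q j) (v j)),
           ∑ i ∈ Icc 1 t, (vecMulVec (k i) (k i)) *ᵥ (∑ j ∈ Ico 1 i, q j)) := by
  intro t _ _
  rw [foldl_hlaOp_map_range]
  simp only [hlaToken, Prod.fst_zero, Prod.snd_zero, zero_add]
  simp only [← Ico_add_one_right_eq_Icc, sum_Ico_eq_sum_range, Nat.add_sub_cancel, add_comm 1]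
end

section
/- Let the sequence of tokens be split into two adjacent blocks A = {1,…,p} and B = {p+1,…,p+r} with p + r = t. Define block-local summaries S_X = Σ_{i∈X} k_i k_iᵀ, C_X = Σ_{i∈X} q_i v_iᵀ, m_X = Σ_{i∈X} q_i, G_X = Σ_{i∈X} (k_i k_iᵀ) C^{loc}_{X,<i}, h_X = Σ_{i∈X} (k_i k_iᵀ) m^{loc}_{X,<i}, where C^{loc}_{X,<i} = Σ_{j∈X, j<i} q_j v_jᵀ and m^{loc}_{X,<i} = Σ_{j∈X, j<i} q_j are the exclusive prefixes within block X. Then the global summaries over {1,…,t} satisfy G_{A∪B} = G_A + G_B + S_B C_A and h_{A∪B} = h_A + h_B + S_B m_A, where G_{A∪B} = Σ_{i=1}^{t} (k_i k_iᵀ)(Σ_{j<i} q_j v_jᵀ) and h_{A∪B} = Σ_{i=1}^{t} (k_i k_iᵀ)(Σ_{j<i} q_j). -/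
open Matrix Finset

/-!
For a token of `A` the exclusive prefix in `A ∪ B` is its prefix in `A`, while for a token `i` of
`B` it is all of `A` followed by the prefix of `i` in `B`. Both products `M * C` and `M *ᵥ m` are
biadditive, that is, `ℕ`-bilinear, so the contribution of `A` to the prefixes in `B` factors as
`S_B C_A`, resp. `S_B m_A`.
-/

section Prefix

variable {ι : Type*} [Preorder ι] {s t : Finset ι} {i : ι}

theorem disjoint_of_forall_lt (h : ∀ i ∈ s, ∀ j ∈ t, i < j) : Disjoint s t :=
  disjoint_left.2 fun i his hit => lt_irrefl i (h i his i hit)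

variable [DecidableLT ι]

theorem filter_lt_Icc_of_mem [LocallyFiniteOrder ι] {a b : ι} (hi : i ∈ Icc a b) :
    {j ∈ Icc a b | j < i} = Ico a i := by
  ext j
  simp only [mem_filter, mem_Icc, mem_Ico]
  exact ⟨fun hj => ⟨hj.1.1, hj.2⟩, fun hj => ⟨⟨hj.1, hj.2.le.trans (mem_Icc.1 hi).2⟩, hj.2⟩⟩

variable [DecidableEq ι]

theorem filter_lt_union_of_mem_left (h : ∀ i ∈ s, ∀ j ∈ t, i < j) (hi : i ∈ s) :
    {j ∈ s ∪ t | j < i} = {j ∈ s | j < i} := by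
  have ht : {j ∈ t | j < i} = ∅ := filter_false_of_mem fun j hj => (h i hi j hj).not_gt
  rw [filter_union, ht, union_empty]

theorem filter_lt_union_of_mem_right (h : ∀ i ∈ s, ∀ j ∈ t, i < j) (hi : i ∈ t) :
    {j ∈ s ∪ t | j < i} = s ∪ {j ∈ t | j < i} := by
  rw [filter_union, filter_true_of_mem fun j hj => h j hj i hi]

end Prefix

theorem Icc_union_Icc_add_one_eq_Icc {ι : Type*} [LinearOrder ι] [LocallyFiniteOrder ι] [Add ι]
    [One ι] [SuccAddOrder ι] [NoMaxOrder ι] {a b c : ι} (hab : a ≤ b + 1) (hbc : b ≤ c) :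
    Icc a b ∪ Icc (b + 1) c = Icc a c := by
  have hbc' : b + 1 ≤ c + 1 := Order.add_one_le_of_lt (Order.lt_add_one_iff.2 hbc)
  simpa only [Ico_add_one_right_eq_Icc] using Ico_union_Ico_eq_Ico hab hbc'

section CrossSummary

variable {R S M N P ι : Type*} [Semiring R] [Semiring S] [AddCommMonoid M] [AddCommMonoid N]
  [AddCommMonoid P] [Module R M] [Module S N] [Module R P] [Module S P] [SMulCommClass S R P]

/-- The cross-summary of a block `s`: each key term `a i` is paired with the exclusive prefix
`∑ j ∈ s, j < i, b j` inside the block. The pairing `f` is matrix multiplication for the summary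
`G`, and the matrix-vector product for `h`. -/
def crossSummary [LT ι] [DecidableLT ι] (f : M →ₗ[R] N →ₗ[S] P) (a : ι → M) (b : ι → N)
    (s : Finset ι) : P :=
  ∑ i ∈ s, f (a i) (∑ j ∈ s with j < i, b j)

theorem crossSummary_Icc [Preorder ι] [LocallyFiniteOrder ι] [DecidableLT ι]
    (f : M →ₗ[R] N →ₗ[S] P) (a : ι → M) (b : ι → N) (x y : ι) :
    crossSummary f a b (Icc x y) = ∑ i ∈ Icc x y, f (a i) (∑ j ∈ Ico x i, b j) :=
  sum_congr rfl fun i hi => by rw [filter_lt_Icc_of_mem hi]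

theorem crossSummary_union [DecidableEq ι] [Preorder ι] [DecidableLT ι]
    (f : M →ₗ[R] N →ₗ[S] P) (a : ι → M) (b : ι → N) {s t : Finset ι}
    (h : ∀ i ∈ s, ∀ j ∈ t, i < j) :
    crossSummary f a b (s ∪ t) =
      crossSummary f a b s + crossSummary f a b t + f (∑ i ∈ t, a i) (∑ j ∈ s, b j) := by
  have hs : ∑ i ∈ s, f (a i) (∑ j ∈ s ∪ t with j < i, b j) = crossSummary f a b s :=
    sum_congr rfl fun i hi => by rw [filter_lt_union_of_mem_left h hi]
  have ht : ∑ i ∈ t, f (a i) (∑ j ∈ s ∪ t with j < i, b j) =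
      f (∑ i ∈ t, a i) (∑ j ∈ s, b j) + crossSummary f a b t := by
    rw [LinearMap.map_sum₂, crossSummary, ← sum_add_distrib]
    refine sum_congr rfl fun i hi => ?_
    rw [filter_lt_union_of_mem_right h hi,
      sum_union ((disjoint_of_forall_lt h).mono_right (filter_subset _ t)), map_add]
  rw [crossSummary, sum_union (disjoint_of_forall_lt h), hs, ht, add_comm (f _ _), add_assoc]

end CrossSummary

theorem hla_block_merge_general {R ι l m o : Type*} [NonUnitalNonAssocSemiring R] [Fintype m]
    [DecidableEq ι] [Preorder ι] [DecidableLT ι] (K : ι → Matrix l m R) (C : ι → Matrix m o R)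
    (q : ι → m → R) {A B : Finset ι} (hAB : ∀ i ∈ A, ∀ j ∈ B, i < j) :
    (crossSummary (mulLinearMap ℕ) K C (A ∪ B)
      = crossSummary (mulLinearMap ℕ) K C A + crossSummary (mulLinearMap ℕ) K C B
        + (∑ i ∈ B, K i) * (∑ i ∈ A, C i))
    ∧ (crossSummary (mulVecBilin ℕ ℕ) K q (A ∪ B)
      = crossSummary (mulVecBilin ℕ ℕ) K q A + crossSummary (mulVecBilin ℕ ℕ) K q B
        + (∑ i ∈ B, K i) *ᵥ (∑ i ∈ A, q i)) :=
  ⟨crossSummary_union (mulLinearMap ℕ) K C hAB, crossSummary_union (mulVecBilin ℕ ℕ) K q hAB⟩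

/-- for adjacent blocks `A = {1,…,p}` and `B = {p+1,…,p+r}` with
`p + r = t`, the global cross-summaries satisfy
`G_{A∪B} = G_A + G_B + S_B C_A` and `h_{A∪B} = h_A + h_B + S_B m_A`. -/
theorem hla_block_merge
    (n d dv : ℕ) (q k : ℕ → Fin d → ℝ) (v : ℕ → Fin dv → ℝ)
    (p r t : ℕ) (hpr : p + r = t) (ht : t ≤ n) :
    (∑ i ∈ Icc 1 t, vecMulVec (k i) (k i) * (∑ j ∈ Ico 1 i, vecMulVec (q j) (v j))
      = (∑ i ∈ Icc 1 p, vecMulVec (k i) (k i) * (∑ j ∈ Ico 1 i, vecMulVec (q j) (v j)))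
        + (∑ i ∈ Icc (p + 1) t,
            vecMulVec (k i) (k i) * (∑ j ∈ Ico (p + 1) i, vecMulVec (q j) (v j)))
        + (∑ i ∈ Icc (p + 1) t, vecMulVec (k i) (k i))
            * (∑ i ∈ Icc 1 p, vecMulVec (q i) (v i)))
    ∧ (∑ i ∈ Icc 1 t, (vecMulVec (k i) (k i)) *ᵥ (∑ j ∈ Ico 1 i, q j)
      = (∑ i ∈ Icc 1 p, (vecMulVec (k i) (k i)) *ᵥ (∑ j ∈ Ico 1 i, q j))
        + (∑ i ∈ Icc (p + 1) t, (vecMulVec (k i) (k i)) *ᵥ (∑ j ∈ Ico (p + 1) i, q j))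
        + (∑ i ∈ Icc (p + 1) t, vecMulVec (k i) (k i)) *ᵥ (∑ i ∈ Icc 1 p, q i)) := by
  have hAB : ∀ i ∈ Icc 1 p, ∀ j ∈ Icc (p + 1) t, i < j := fun i hi j hj =>
    Nat.lt_of_le_of_lt (mem_Icc.1 hi).2 (mem_Icc.1 hj).1
  have hunion : Icc 1 p ∪ Icc (p + 1) t = Icc 1 t :=
    Icc_union_Icc_add_one_eq_Icc p.succ_pos (hpr ▸ p.le_add_right r)
  simpa only [hunion, crossSummary_Icc, mulLinearMap_apply_apply, mulVecBilin_apply] using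
    hla_block_merge_general (fun i => vecMulVec (k i) (k i)) (fun i => vecMulVec (q i) (v i)) q hAB
end

section
/- For every t ∈ {1,…,n}, the strictly causal asymmetric second-order output satisfies Σ_{j=1}^{t} Σ_{i=j}^{t} (q_tᵀ k_i)(q_iᵀ k_j) v_jᵀ = q_tᵀ E_t, as an identity of row vectors in ℝ^{1×d_v}, where E_t = Σ_{i=1}^{t} k_i (q_iᵀ P_i) and P_i = Σ_{j=1}^{i} k_j v_jᵀ. -/
open Matrix Finset

theorem sum_Icc_Icc_comm {ι M : Type*} [Preorder ι] [LocallyFiniteOrder ι] [AddCommMonoid M]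
    (a b : ι) (f : ι → ι → M) :
    ∑ i ∈ Icc a b, ∑ j ∈ Icc i b, f i j = ∑ j ∈ Icc a b, ∑ i ∈ Icc a j, f i j := by
  refine sum_comm' fun i j => ?_
  simp only [mem_Icc]
  constructor
  · rintro ⟨⟨hai, -⟩, hij, hjb⟩
    exact ⟨⟨hai, hij⟩, hai.trans hij, hjb⟩
  · rintro ⟨⟨hai, hij⟩, -, hjb⟩
    exact ⟨⟨hai, hij.trans hjb⟩, hij, hjb⟩

section VecMul

variable {ι m p R : Type*} [Fintype m] [NonUnitalSemiring R]

theorem vecMul_sum_vecMulVec (s : Finset ι) (x : m → R) (a : ι → m → R) (b : ι → p → R) :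
    x ᵥ* (∑ i ∈ s, vecMulVec (a i) (b i)) = ∑ i ∈ s, (x ⬝ᵥ a i) • b i := by
  simp only [vecMul_sum, vecMul_vecMulVec]

theorem ahla_masked_streaming_numerator_general [Preorder ι] [LocallyFiniteOrder ι]
    (x : m → R) (q k : ι → m → R) (v : ι → p → R) (s t : ι) :
    ∑ j ∈ Icc s t, ∑ i ∈ Icc j t, ((x ⬝ᵥ k i) * (q i ⬝ᵥ k j)) • v j
      = x ᵥ* (∑ i ∈ Icc s t,
          vecMulVec (k i) (q i ᵥ* (∑ j ∈ Icc s i, vecMulVec (k j) (v j)))) :=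
  calc
    ∑ j ∈ Icc s t, ∑ i ∈ Icc j t, ((x ⬝ᵥ k i) * (q i ⬝ᵥ k j)) • v j
        = ∑ i ∈ Icc s t, ∑ j ∈ Icc s i, ((x ⬝ᵥ k i) * (q i ⬝ᵥ k j)) • v j :=
      sum_Icc_Icc_comm s t _
    _ = ∑ i ∈ Icc s t, (x ⬝ᵥ k i) • ∑ j ∈ Icc s i, (q i ⬝ᵥ k j) • v j := by
      simp only [smul_sum, ← smul_eq_mul, smul_assoc]
    _ = x ᵥ* (∑ i ∈ Icc s t,
          vecMulVec (k i) (q i ᵥ* (∑ j ∈ Icc s i, vecMulVec (k j) (v j)))) := by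
      simp only [vecMul_sum_vecMulVec]

end VecMul

/-- the strictly causal asymmetric second-order (AHLA) output satisfies
`Σ_{j=1}^{t} Σ_{i=j}^{t} (q_tᵀ kᵢ)(qᵢᵀ kⱼ) vⱼᵀ = q_tᵀ E_t`, where
`E_t = Σ_{i=1}^{t} kᵢ (qᵢᵀ Pᵢ)` and `Pᵢ = Σ_{j=1}^{i} kⱼ vⱼᵀ`. -/
theorem ahla_masked_streaming_numerator
    (n d dv : ℕ) (q k : ℕ → Fin d → ℝ) (v : ℕ → Fin dv → ℝ) :
    ∀ t, 1 ≤ t → t ≤ n →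
      ∑ j ∈ Icc 1 t, ∑ i ∈ Icc j t, ((q t ⬝ᵥ k i) * (q i ⬝ᵥ k j)) • v j
        = (q t) ᵥ*
            (∑ i ∈ Icc 1 t,
              vecMulVec (k i) ((q i) ᵥ* (∑ j ∈ Icc 1 i, vecMulVec (k j) (v j)))) :=
  fun t _ _ => ahla_masked_streaming_numerator_general (q t) q k v 1 t
end

section
/- The binary operation ⊕ on tuples (R, P, m, E, n) ∈ ℝ^{d×d} × ℝ^{d×d_v} × ℝ^d × ℝ^{d×d_v} × ℝ^d defined by (R_A, P_A, m_A, E_A, n_A) ⊕ (R_B, P_B, m_B, E_B, n_B) = (R_A + R_B, P_A + P_B, m_A + m_B, E_A + E_B + R_B P_A, n_A + n_B + R_B m_A) is associative, and the all-zero tuple is a two-sided identity for ⊕. -/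
open Matrix

/-- AHLA scan state `(R, P, m, E, n)`. -/
abbrev AHLAState (d dv : ℕ) :=
  Matrix (Fin d) (Fin d) ℝ × Matrix (Fin d) (Fin dv) ℝ × (Fin d → ℝ) ×
    Matrix (Fin d) (Fin dv) ℝ × (Fin d → ℝ)

/-- The AHLA concatenation operator. -/
def ahlaOp (d dv : ℕ) (A B : AHLAState d dv) : AHLAState d dv :=
  (A.1 + B.1,
   A.2.1 + B.2.1,
   A.2.2.1 + B.2.2.1,
   A.2.2.2.1 + B.2.2.2.1 + B.1 * A.2.1,
   A.2.2.2.2 + B.2.2.2.2 + B.1 *ᵥ A.2.2.1)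

/-!
The components `R`, `P`, `m` simply add, while `E` and `n` pick up the biadditive corrections
`R_B P_A` and `R_B m_A`. In either bracketing of a triple, the total correction of a biadditive
`β` is `β R_B P_A + β R_C P_A + β R_C P_B`: one term for each pair of states, the earlier one
supplying `P` and the later one `R`. A correction vanishes as soon as one of its arguments does.
-/

section BiadditiveScan

variable {X P V E W : Type*}

/-- The AHLA concatenation law with the products `R_B P_A` and `R_B m_A` replaced by arbitrary
biadditive maps `β` and `γ`; tuples are in the order `(R, P, m, E, n)`. -/
def biadditiveScanOp [AddZeroClass X] [AddZeroClass P] [AddZeroClass V] [AddCommMonoid E]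
    [AddCommMonoid W] (β : X →+ P →+ E) (γ : X →+ V →+ W) (A B : X × P × V × E × W) :
    X × P × V × E × W :=
  (A.1 + B.1,
   A.2.1 + B.2.1,
   A.2.2.1 + B.2.2.1,
   A.2.2.2.1 + B.2.2.2.1 + β B.1 A.2.1,
   A.2.2.2.2 + B.2.2.2.2 + γ B.1 A.2.2.1)

theorem add_biadditive_correction_assoc [AddZeroClass X] [AddZeroClass P] [AddCommMonoid E]
    (β : X →+ P →+ E) (xb xc : X) (pa pb : P) (ea eb ec : E) :
    (ea + eb + β xb pa) + ec + β xc (pa + pb) =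
      ea + (eb + ec + β xc pb) + β (xb + xc) pa :=
  calc
    (ea + eb + β xb pa) + ec + β xc (pa + pb)
        = (ea + eb + ec) + (β xb pa + β xc pa + β xc pb) := by
      rw [map_add]
      abel
    _ = ea + (eb + ec + β xc pb) + β (xb + xc) pa := by
      rw [map_add, AddMonoidHom.add_apply]
      abel

theorem biadditiveScanOp_assoc [AddMonoid X] [AddMonoid P] [AddMonoid V] [AddCommMonoid E]
    [AddCommMonoid W] (β : X →+ P →+ E) (γ : X →+ V →+ W) (A B C : X × P × V × E × W) :
    biadditiveScanOp β γ (biadditiveScanOp β γ A B) C =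
      biadditiveScanOp β γ A (biadditiveScanOp β γ B C) := by
  simp only [biadditiveScanOp, add_assoc A.1, add_assoc A.2.1, add_assoc A.2.2.1,
    add_biadditive_correction_assoc]

variable [AddZeroClass X] [AddZeroClass P] [AddZeroClass V] [AddCommMonoid E] [AddCommMonoid W]

theorem zero_biadditiveScanOp (β : X →+ P →+ E) (γ : X →+ V →+ W) (A : X × P × V × E × W) :
    biadditiveScanOp β γ 0 A = A := by
  simp [biadditiveScanOp]

theorem biadditiveScanOp_zero (β : X →+ P →+ E) (γ : X →+ V →+ W) (A : X × P × V × E × W) :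
    biadditiveScanOp β γ A 0 = A := by
  simp [biadditiveScanOp]

end BiadditiveScan

theorem ahlaOp_assoc_and_zero_identity_general {X P V E W : Type*} [AddMonoid X] [AddMonoid P]
    [AddMonoid V] [AddCommMonoid E] [AddCommMonoid W] (β : X →+ P →+ E) (γ : X →+ V →+ W) :
    (∀ A B C : X × P × V × E × W,
        biadditiveScanOp β γ (biadditiveScanOp β γ A B) C =
          biadditiveScanOp β γ A (biadditiveScanOp β γ B C)) ∧
    (∀ A : X × P × V × E × W, biadditiveScanOp β γ 0 A = A ∧ biadditiveScanOp β γ A 0 = A) :=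
  ⟨biadditiveScanOp_assoc β γ,
    fun A => ⟨zero_biadditiveScanOp β γ A, biadditiveScanOp_zero β γ A⟩⟩

/-- `⊕` on AHLA states is associative with the all-zero tuple as a
two-sided identity. -/
theorem ahlaOp_assoc_and_zero_identity (d dv : ℕ) :
    (∀ A B C : AHLAState d dv,
        ahlaOp d dv (ahlaOp d dv A B) C = ahlaOp d dv A (ahlaOp d dv B C)) ∧
    (∀ A : AHLAState d dv, ahlaOp d dv 0 A = A ∧ ahlaOp d dv A 0 = A) := by
  exact ahlaOp_assoc_and_zero_identity_general
    (LinearMap.toAddMonoidHom'.comp (mulLinearMap ℝ).toAddMonoidHom)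
    (LinearMap.toAddMonoidHom'.comp (mulVecBilin ℝ ℝ).toAddMonoidHom)
end

section
/- Let the sequence of tokens be split into two adjacent blocks A = {1,…,p} and B = {p+1,…,p+r} with p + r = t. Define block-local summaries R_X = Σ_{i∈X} k_i q_iᵀ, P_X = Σ_{i∈X} k_i v_iᵀ, m_X = Σ_{i∈X} k_i, E_X = Σ_{i∈X} k_i (q_iᵀ P^{loc}_{X,≤i}), n_X = Σ_{i∈X} (q_iᵀ m^{loc}_{X,≤i}) k_i, where P^{loc}_{X,≤i} = Σ_{j∈X, j≤i} k_j v_jᵀ and m^{loc}_{X,≤i} = Σ_{j∈X, j≤i} k_j are the inclusive prefixes within block X. Then the global summaries over {1,…,t} satisfy E_{A∪B} = E_A + E_B + R_B P_A and n_{A∪B} = n_A + n_B + R_B m_A, where E_{A∪B} = Σ_{i=1}^{t} k_i (q_iᵀ Σ_{j≤i} k_j v_jᵀ) and n_{A∪B} = Σ_{i=1}^{t} (q_iᵀ Σ_{j≤i} k_j) k_i. -/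
open Matrix Finset

/-!
With `R i = k i (q i)ᵀ`, associativity writes both summaries as causal sums `∑ i, R i * S (≤ i)`,
where `S (≤ i)` is the prefix sum of `k j (v j)ᵀ`, respectively of `k j`. For `i` in the second
block, the prefix sum is that of the first block, independent of `i`, plus the prefix sum local to
the second block. Bilinearity then collects the former contributions into `R_B * S_A`.
-/

section CausalSum

variable {ι : Type*} [LinearOrder ι] [LocallyFiniteOrder ι] {a p t : ι}

theorem sum_Ioc_add_sum_Ioc {M : Type*} [AddCommMonoid M] (f : ι → M) (hap : a ≤ p) (hpt : p ≤ t) :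
    ∑ i ∈ Ioc a p, f i + ∑ i ∈ Ioc p t, f i = ∑ i ∈ Ioc a t, f i := by
  rw [← Ioc_union_Ioc_eq_Ioc hap hpt, sum_union (Ioc_disjoint_Ioc_of_le le_rfl)]

theorem sum_Ioc_bilin_sum_Ioc_eq_add {R S L M N : Type*} [Semiring R] [Semiring S]
    [AddCommMonoid L] [AddCommMonoid M] [AddCommMonoid N] [Module R L] [Module S M]
    [Module R N] [Module S N] [SMulCommClass S R N]
    (B : L →ₗ[R] M →ₗ[S] N) (f : ι → L) (g : ι → M) (hap : a ≤ p) (hpt : p ≤ t) :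
    ∑ i ∈ Ioc a t, B (f i) (∑ j ∈ Ioc a i, g j) =
      ∑ i ∈ Ioc a p, B (f i) (∑ j ∈ Ioc a i, g j) + ∑ i ∈ Ioc p t, B (f i) (∑ j ∈ Ioc p i, g j) +
        B (∑ i ∈ Ioc p t, f i) (∑ j ∈ Ioc a p, g j) := by
  have split_prefix : ∀ i ∈ Ioc p t, B (f i) (∑ j ∈ Ioc a i, g j) =
      B (f i) (∑ j ∈ Ioc p i, g j) + B (f i) (∑ j ∈ Ioc a p, g j) := fun i hi ↦ by
    rw [← sum_Ioc_add_sum_Ioc g hap (mem_Ioc.1 hi).1.le, map_add, add_comm]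
  rw [← sum_Ioc_add_sum_Ioc _ hap hpt, sum_congr rfl split_prefix, sum_add_distrib,
    LinearMap.map_sum₂, add_assoc]

end CausalSum

theorem vecMulVec_mulVec_eq_smul {m n α : Type*} [Fintype n] [NonUnitalCommSemiring α]
    (u : m → α) (v w : n → α) : vecMulVec u v *ᵥ w = (v ⬝ᵥ w) • u := by
  rw [vecMulVec_mulVec, op_smul_eq_smul]

theorem ahla_block_merge_general {ι m n α : Type*} [LinearOrder ι] [LocallyFiniteOrder ι]
    [Fintype m] [NonUnitalCommSemiring α] (q k : ι → m → α) (v : ι → n → α) {a p t : ι}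
    (hap : a ≤ p) (hpt : p ≤ t) :
    (∑ i ∈ Ioc a t, vecMulVec (k i) (q i ᵥ* ∑ j ∈ Ioc a i, vecMulVec (k j) (v j))
      = ∑ i ∈ Ioc a p, vecMulVec (k i) (q i ᵥ* ∑ j ∈ Ioc a i, vecMulVec (k j) (v j))
        + ∑ i ∈ Ioc p t, vecMulVec (k i) (q i ᵥ* ∑ j ∈ Ioc p i, vecMulVec (k j) (v j))
        + (∑ i ∈ Ioc p t, vecMulVec (k i) (q i)) * ∑ i ∈ Ioc a p, vecMulVec (k i) (v i))
    ∧ (∑ i ∈ Ioc a t, (q i ⬝ᵥ ∑ j ∈ Ioc a i, k j) • k i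
      = ∑ i ∈ Ioc a p, (q i ⬝ᵥ ∑ j ∈ Ioc a i, k j) • k i
        + ∑ i ∈ Ioc p t, (q i ⬝ᵥ ∑ j ∈ Ioc p i, k j) • k i
        + (∑ i ∈ Ioc p t, vecMulVec (k i) (q i)) *ᵥ ∑ i ∈ Ioc a p, k i) := by
  simp only [← vecMulVec_mul, ← vecMulVec_mulVec_eq_smul]
  -- Without a unit, `α` offers no scalars of its own; `ℕ`-bilinearity is biadditivity.
  exact ⟨sum_Ioc_bilin_sum_Ioc_eq_add (mulLinearMap ℕ)
      (fun i ↦ vecMulVec (k i) (q i)) (fun j ↦ vecMulVec (k j) (v j)) hap hpt,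
    sum_Ioc_bilin_sum_Ioc_eq_add (mulVecBilin ℕ ℕ)
      (fun i ↦ vecMulVec (k i) (q i)) k hap hpt⟩

/-- for adjacent blocks `A = {1,…,p}` and `B = {p+1,…,p+r}` with
`p + r = t`, the global AHLA summaries satisfy `E_{A∪B} = E_A + E_B + R_B P_A`
and `n_{A∪B} = n_A + n_B + R_B m_A`. -/
theorem ahla_block_merge
    (n d dv : ℕ) (q k : ℕ → Fin d → ℝ) (v : ℕ → Fin dv → ℝ)
    (p r t : ℕ) (hpr : p + r = t) (ht : t ≤ n) :
    (∑ i ∈ Icc 1 t, vecMulVec (k i) ((q i) ᵥ* (∑ j ∈ Icc 1 i, vecMulVec (k j) (v j)))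
      = (∑ i ∈ Icc 1 p,
            vecMulVec (k i) ((q i) ᵥ* (∑ j ∈ Icc 1 i, vecMulVec (k j) (v j))))
        + (∑ i ∈ Icc (p + 1) t,
            vecMulVec (k i) ((q i) ᵥ* (∑ j ∈ Icc (p + 1) i, vecMulVec (k j) (v j))))
        + (∑ i ∈ Icc (p + 1) t, vecMulVec (k i) (q i))
            * (∑ i ∈ Icc 1 p, vecMulVec (k i) (v i)))
    ∧ (∑ i ∈ Icc 1 t, (q i ⬝ᵥ (∑ j ∈ Icc 1 i, k j)) • k i
      = (∑ i ∈ Icc 1 p, (q i ⬝ᵥ (∑ j ∈ Icc 1 i, k j)) • k i)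
        + (∑ i ∈ Icc (p + 1) t, (q i ⬝ᵥ (∑ j ∈ Icc (p + 1) i, k j)) • k i)
        + (∑ i ∈ Icc (p + 1) t, vecMulVec (k i) (q i)) *ᵥ (∑ i ∈ Icc 1 p, k i)) := by
  simpa only [← Icc_add_one_left_eq_Ioc, zero_add] using
    ahla_block_merge_general q k v p.zero_le (hpr ▸ p.le_add_right r)
end

section
/- Define token segments T_i = (k_i q_iᵀ, k_i v_iᵀ, k_i, (q_iᵀ k_i) k_i v_iᵀ, (q_iᵀ k_i) k_i) for i = 1,…,n and the operation (R_A, P_A, m_A, E_A, n_A) ⊕ (R_B, P_B, m_B, E_B, n_B) = (R_A + R_B, P_A + P_B, m_A + m_B, E_A + E_B + R_B P_A, n_A + n_B + R_B m_A). Then for every t ∈ {1,…,n}, the left fold ((T_1 ⊕ T_2) ⊕ ⋯ ) ⊕ T_t (starting from the all-zero tuple) equals (R_t, P_t, m^K_t, E_t, n_t), where R_t = Σ_{i=1}^{t} k_i q_iᵀ, P_t = Σ_{i=1}^{t} k_i v_iᵀ, m^K_t = Σ_{i=1}^{t} k_i, E_t = Σ_{i=1}^{t} k_i (q_iᵀ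 P_i), and n_t = Σ_{i=1}^{t} (q_iᵀ m^K_i) k_i. -/
/-!
Unrolling the fold, the fourth component is `∑ i, (E_i + R_i P_{i-1})`, where `R_i`, `E_i` are
entries of the `i`-th segment and `P_{i-1}` is the sum over the strictly earlier segments. For
token segments `R_i P_{i-1} = kᵢ (qᵢᵀ P_{i-1})`, and `E_i = kᵢ (qᵢᵀ kᵢvᵢᵀ)` is exactly the diagonal
term that completes `P_{i-1}` to `P_i`. The fifth component is the same with `m` in place of `P`.
-/

open Matrix Finset

/-- Token segment `T_i = (kᵢqᵢᵀ, kᵢvᵢᵀ, kᵢ, (qᵢᵀkᵢ) kᵢvᵢᵀ, (qᵢᵀkᵢ) kᵢ)`. -/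
def ahlaToken (d dv : ℕ) (q k : ℕ → Fin d → ℝ) (v : ℕ → Fin dv → ℝ) (i : ℕ) :
    AHLAState d dv :=
  (vecMulVec (k i) (q i), vecMulVec (k i) (v i), k i,
   (q i ⬝ᵥ k i) • vecMulVec (k i) (v i), (q i ⬝ᵥ k i) • k i)

section CrossAdd

variable {R P M E N : Type*}

/-- Componentwise addition of scan states `(r, p, m, e, n)`, corrected by the interaction of the
later segment `B` with the earlier segment `A`. The AHLA operator `⊕` is the case where `f` and `g`
are the matrix-matrix and matrix-vector products. -/
def crossAdd [Add R] [Add P] [Add M] [Add E] [Add N] (f : R → P → E) (g : R → M → N)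
    (A B : R × P × M × E × N) : R × P × M × E × N :=
  (A.1 + B.1,
   A.2.1 + B.2.1,
   A.2.2.1 + B.2.2.1,
   A.2.2.2.1 + B.2.2.2.1 + f B.1 A.2.1,
   A.2.2.2.2 + B.2.2.2.2 + g B.1 A.2.2.1)

theorem foldl_crossAdd_map_range [AddCommMonoid R] [AddCommMonoid P] [AddCommMonoid M]
    [AddCommMonoid E] [AddCommMonoid N] (f : R → P → E) (g : R → M → N)
    (A : ℕ → R × P × M × E × N) (t : ℕ) :
    List.foldl (crossAdd f g) 0 ((List.range t).map fun i => A (i + 1)) =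
      (∑ i ∈ Icc 1 t, (A i).1,
       ∑ i ∈ Icc 1 t, (A i).2.1,
       ∑ i ∈ Icc 1 t, (A i).2.2.1,
       ∑ i ∈ Icc 1 t, ((A i).2.2.2.1 + f (A i).1 (∑ j ∈ Ico 1 i, (A j).2.1)),
       ∑ i ∈ Icc 1 t, ((A i).2.2.2.2 + g (A i).1 (∑ j ∈ Ico 1 i, (A j).2.2.1))) := by
  induction t with
  | zero => rfl
  | succ t ih =>
    rw [List.range_succ, List.map_append, List.foldl_append, ih]
    simp only [List.map_cons, List.map_nil, List.foldl_cons, List.foldl_nil, crossAdd,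
      sum_Icc_succ_top (Nat.le_add_left 1 t), Ico_add_one_right_eq_Icc, add_assoc]

end CrossAdd

section TokenSegment

variable {ι κ S : Type*} [Fintype ι] [CommSemiring S]

/-- The segment `(kqᵀ, kvᵀ, k, (qᵀk) kvᵀ, (qᵀk) k)` of a single token with query `q`, key `k` and
value `v`, over an arbitrary commutative semiring of scalars. -/
def tokenSegment (q k : ι → S) (v : κ → S) :
    Matrix ι ι S × Matrix ι κ S × (ι → S) × Matrix ι κ S × (ι → S) :=
  (vecMulVec k q, vecMulVec k v, k, (q ⬝ᵥ k) • vecMulVec k v, (q ⬝ᵥ k) • k)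

theorem dotProduct_smul_vecMulVec_add_vecMulVec_mul (q k : ι → S) (v : κ → S)
    (P : Matrix ι κ S) :
    (q ⬝ᵥ k) • vecMulVec k v + vecMulVec k q * P = vecMulVec k (q ᵥ* (P + vecMulVec k v)) := by
  rw [vecMul_add, vecMul_vecMulVec, vecMulVec_add, vecMulVec_smul, vecMulVec_mul, add_comm]

theorem dotProduct_smul_add_vecMulVec_mulVec (q k m : ι → S) :
    (q ⬝ᵥ k) • k + vecMulVec k q *ᵥ m = (q ⬝ᵥ (m + k)) • k := by
  rw [dotProduct_add, add_smul, vecMulVec_mulVec, op_smul_eq_smul, add_comm]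

theorem ahla_fold_eq_prefix_summaries_general (q k : ℕ → ι → S) (v : ℕ → κ → S) (t : ℕ) :
    List.foldl (crossAdd (· * ·) (· *ᵥ ·)) 0
        ((List.range t).map fun i => tokenSegment (q (i + 1)) (k (i + 1)) (v (i + 1)))
      = (∑ i ∈ Icc 1 t, vecMulVec (k i) (q i),
         ∑ i ∈ Icc 1 t, vecMulVec (k i) (v i),
         ∑ i ∈ Icc 1 t, k i,
         ∑ i ∈ Icc 1 t, vecMulVec (k i) (q i ᵥ* ∑ j ∈ Icc 1 i, vecMulVec (k j) (v j)),
         ∑ i ∈ Icc 1 t, (q i ⬝ᵥ ∑ j ∈ Icc 1 i, k j) • k i) := by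
  rw [foldl_crossAdd_map_range _ _ fun i => tokenSegment (q i) (k i) (v i)]
  simp only [tokenSegment, dotProduct_smul_vecMulVec_add_vecMulVec_mul,
    dotProduct_smul_add_vecMulVec_mulVec]
  congr! 5 with i hi i hi
  · rw [sum_Ico_add_eq_sum_Icc (mem_Icc.1 hi).1]
  · rw [sum_Ico_add_eq_sum_Icc (mem_Icc.1 hi).1]

end TokenSegment

/-- the left fold of `T_1, …, T_t` under `⊕` (starting from the
all-zero tuple) equals `(R_t, P_t, m^K_t, E_t, n_t)`. -/
theorem ahla_fold_eq_prefix_summaries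
    (n d dv : ℕ) (q k : ℕ → Fin d → ℝ) (v : ℕ → Fin dv → ℝ) :
    ∀ t, 1 ≤ t → t ≤ n →
      List.foldl (ahlaOp d dv) 0 ((List.range t).map fun i => ahlaToken d dv q k v (i + 1))
        = (∑ i ∈ Icc 1 t, vecMulVec (k i) (q i),
           ∑ i ∈ Icc 1 t, vecMulVec (k i) (v i),
           ∑ i ∈ Icc 1 t, k i,
           ∑ i ∈ Icc 1 t,
             vecMulVec (k i) ((q i) ᵥ* (∑ j ∈ Icc 1 i, vecMulVec (k j) (v j))),
           ∑ i ∈ Icc 1 t, (q i ⬝ᵥ (∑ j ∈ Icc 1 i, k j)) • k i) :=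
  fun t _ _ => ahla_fold_eq_prefix_summaries_general q k v t
end

section
/- For every t ∈ {1,…,n}, Σ_{u=1}^{t} S^K_u (q_u q_uᵀ) P^{KV}_u = S^K_t S^Q_t P^{KV}_t − Σ_{u=1}^{t} (k_u k_uᵀ) S^Q_{u−1} P^{KV}_u − Σ_{u=1}^{t} S^K_{u−1} S^Q_{u−1} (k_u v_uᵀ), as an identity of d×d_v real matrices. -/
open Matrix Finset

/-!
Expand `S^K_t S^Q_t P^{KV}_t` as a sum over triples of indices `(i, j, l)` and classify the triples
by the position of their maximum. It is attained at `j`; or else at `i`, with `j < i` and `l ≤ i`;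
or else only at `l`, with `i, j < l`. These three classes give the three sums. The classification is
done one factor at a time: a product of two sums splits along the diagonal, and then so does the
product of the result with the third sum.
-/

section Triangle

variable {ι M : Type*} [LinearOrder ι] [LocallyFiniteOrder ι] [AddCommMonoid M]

lemma sum_Ico_eq_sum_Ico_add_sum_Ico_of_le {a b c : ι} (hac : a ≤ c) (hcb : c ≤ b) (f : ι → M) :
    ∑ i ∈ Ico a b, f i = ∑ i ∈ Ico a c, f i + ∑ i ∈ Ico c b, f i := by
  rw [← Ico_union_Ico_eq_Ico hac hcb, sum_union (Ico_disjoint_Ico_consecutive a c b)]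

lemma sum_Ico_sum_Ico_eq_lt_add_le (a b : ι) (f : ι → ι → M) :
    ∑ i ∈ Ico a b, ∑ j ∈ Ico a b, f i j =
      ∑ i ∈ Ico a b, ∑ j ∈ Ico a i, f i j + ∑ j ∈ Ico a b, ∑ i ∈ Icc a j, f i j := by
  have upper_triangle_comm :
      ∑ i ∈ Ico a b, ∑ j ∈ Ico i b, f i j = ∑ j ∈ Ico a b, ∑ i ∈ Icc a j, f i j :=
    sum_comm' fun i j ↦ by simp only [mem_Ico, mem_Icc]; grind
  rw [← upper_triangle_comm, ← sum_add_distrib]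
  refine sum_congr rfl fun i hi ↦ ?_
  obtain ⟨hai, hib⟩ := mem_Ico.mp hi
  exact sum_Ico_eq_sum_Ico_add_sum_Ico_of_le hai hib.le (f i)

end Triangle

section MatrixProduct

variable {ι l m n p R : Type*} [LinearOrder ι] [LocallyFiniteOrder ι] [Fintype m]
  [NonUnitalNonAssocSemiring R]

lemma sum_Ico_mul_sum_Ico_eq_lt_add_le (a b : ι) (A : ι → Matrix l m R) (B : ι → Matrix m n R) :
    (∑ i ∈ Ico a b, A i) * (∑ i ∈ Ico a b, B i) =
      ∑ u ∈ Ico a b, A u * (∑ i ∈ Ico a u, B i) + ∑ u ∈ Ico a b, (∑ i ∈ Icc a u, A i) * B u := by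
  simp only [Matrix.sum_mul, Matrix.mul_sum]
  rw [sum_comm]
  exact sum_Ico_sum_Ico_eq_lt_add_le a b fun i j ↦ A i * B j

lemma sum_Ico_mul_sum_Ico_eq_le_add_lt (a b : ι) (A : ι → Matrix l m R) (B : ι → Matrix m n R) :
    (∑ i ∈ Ico a b, A i) * (∑ i ∈ Ico a b, B i) =
      ∑ u ∈ Ico a b, A u * (∑ i ∈ Icc a u, B i) + ∑ u ∈ Ico a b, (∑ i ∈ Ico a u, A i) * B u := by
  simp only [Matrix.sum_mul, Matrix.mul_sum]
  rw [add_comm]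
  exact sum_Ico_sum_Ico_eq_lt_add_le a b fun j i ↦ A i * B j

theorem third_order_prefix_sum_identity_general [Fintype n] (a b : ι)
    (A : ι → Matrix l m R) (B : ι → Matrix m n R) (C : ι → Matrix n p R) :
    ∑ u ∈ Ico a b, (∑ i ∈ Icc a u, A i) * B u * (∑ i ∈ Icc a u, C i)
        + ∑ u ∈ Ico a b, A u * (∑ i ∈ Ico a u, B i) * (∑ i ∈ Icc a u, C i)
        + ∑ u ∈ Ico a b, (∑ i ∈ Ico a u, A i) * (∑ i ∈ Ico a u, B i) * C u
      = (∑ i ∈ Ico a b, A i) * (∑ i ∈ Ico a b, B i) * (∑ i ∈ Ico a b, C i) := by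
  let D (u : ι) : Matrix l n R := A u * (∑ i ∈ Ico a u, B i) + (∑ i ∈ Icc a u, A i) * B u
  have sum_D (c : ι) : ∑ u ∈ Ico a c, D u = (∑ i ∈ Ico a c, A i) * (∑ i ∈ Ico a c, B i) := by
    rw [sum_Ico_mul_sum_Ico_eq_lt_add_le, sum_add_distrib]
  symm
  calc (∑ i ∈ Ico a b, A i) * (∑ i ∈ Ico a b, B i) * (∑ i ∈ Ico a b, C i)
    _ = (∑ u ∈ Ico a b, D u) * (∑ i ∈ Ico a b, C i) := by rw [sum_D]
    _ = ∑ u ∈ Ico a b, D u * (∑ i ∈ Icc a u, C i)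
          + ∑ u ∈ Ico a b, (∑ i ∈ Ico a u, D i) * C u :=
      sum_Ico_mul_sum_Ico_eq_le_add_lt a b D C
    _ = _ := by
      simp only [sum_D]
      simp only [D, Matrix.add_mul, sum_add_distrib]
      rw [add_comm (∑ u ∈ Ico a b, A u * _ * _)]

end MatrixProduct

/-- `Σ_{u=1}^{t} S^K_u (q_u q_uᵀ) P^{KV}_u
  = S^K_t S^Q_t P^{KV}_t − Σ_{u=1}^{t} (k_u k_uᵀ) S^Q_{u−1} P^{KV}_u
    − Σ_{u=1}^{t} S^K_{u−1} S^Q_{u−1} (k_u v_uᵀ)` as `d × d_v` matrices. -/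
theorem third_order_prefix_sum_identity
    (n d dv : ℕ) (q k : ℕ → Fin d → ℝ) (v : ℕ → Fin dv → ℝ) :
    ∀ t, 1 ≤ t → t ≤ n →
      ∑ u ∈ Icc 1 t,
          (∑ i ∈ Icc 1 u, vecMulVec (k i) (k i)) * vecMulVec (q u) (q u)
            * (∑ i ∈ Icc 1 u, vecMulVec (k i) (v i))
        = (∑ i ∈ Icc 1 t, vecMulVec (k i) (k i)) * (∑ i ∈ Icc 1 t, vecMulVec (q i) (q i))
            * (∑ i ∈ Icc 1 t, vecMulVec (k i) (v i))
          - ∑ u ∈ Icc 1 t,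
              vecMulVec (k u) (k u) * (∑ i ∈ Ico 1 u, vecMulVec (q i) (q i))
                * (∑ i ∈ Icc 1 u, vecMulVec (k i) (v i))
          - ∑ u ∈ Icc 1 t,
              (∑ i ∈ Ico 1 u, vecMulVec (k i) (k i)) * (∑ i ∈ Ico 1 u, vecMulVec (q i) (q i))
                * vecMulVec (k u) (v u) := by
  intro t _ _
  rw [sub_sub, eq_sub_iff_add_eq, ← add_assoc]
  simpa only [Ico_add_one_right_eq_Icc] using third_order_prefix_sum_identity_general 1 (t + 1)
    (fun i ↦ vecMulVec (k i) (k i)) (fun i ↦ vecMulVec (q i) (q i)) fun i ↦ vecMulVec (k i) (v i)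
end
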